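/- arXiv:2605.10742 — 2 statements merged into one kernel-verified Lean document; each statement's English description precedes it below -/
import Mathlib

section
/- Let H be a complex Hilbert space, let A, B be strictly positive bounded operators on H, and suppose m·I ≤ B ≤ M·I for some 0 < m ≤ M; put h := M/m. For p > 0 set C_p(m,M) := ((M^p − m^p)/(log M^p − log m^p))·log S(h^p) if m < M and C_p(m,M) := 0 if m = M, where S(h) := (h−1)·h^{1/(h−1)}/(e·log h) for h > 1 and S(1) := 1. If for every p > 0 one has A^p + C_p(m,M)·I ≥ B^p, then log A ≥ log B. -/
/-!
For strictly positive `a`, `(a ^ p - 1) / p → log a` as `p → 0⁺`, so dividing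
`b ^ p ≤ a ^ p + C_p` by `p` and letting `p → 0⁺` gives `log b ≤ log a` as soon as `C_p = o(p)`.
With `u = log (M / m) * p` and `w(u) = (exp u - 1) / u`, the Kantorovich constant is
`C_p = m ^ p * φ (w u)` where `φ x = x log x + 1 - x`. Since `w 0 = 1` and both `φ`
and its derivative vanish at `1`, `C_p` vanishes to second order at `p = 0`.
-/

noncomputable section

open ContinuousLinearMap

variable {H : Type*} [NormedAddCommGroup H] [InnerProductSpace ℂ H] [CompleteSpace H]

/-- The operator logarithm, defined via the continuous functional calculus. -/
def opLog (A : H →L[ℂ] H) : H →L[ℂ] H := cfc Real.log A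

/-- The Fujii–Seo determinant `Δ_x(A) = exp (re⟪(log A) x, x⟫)` of a strictly positive
operator `A` at a vector `x`. -/
def fsDet (A : H →L[ℂ] H) (x : H) : ℝ :=
  Real.exp ((opLog A).reApplyInnerSelf x)

/-- The operator power `A^p`, defined via the continuous functional calculus. -/
def opPow (A : H →L[ℂ] H) (p : ℝ) : H →L[ℂ] H := cfc (fun t : ℝ => t ^ p) A

/-- Specht's ratio `S(h) = (h - 1) * h ^ (1 / (h - 1)) / (e * log h)` for `h ≠ 1`,
with `S(1) = 1`. -/
def spechtRatio (h : ℝ) : ℝ :=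
  if h = 1 then 1 else (h - 1) * h ^ ((1 : ℝ) / (h - 1)) / (Real.exp 1 * Real.log h)

/-- The additive constant
`C_p(m,M) = ((M^p - m^p)/(log M^p - log m^p)) * log S((M/m)^p)` for `m < M`,
and `C_p(m,m) = 0`. -/
def fsAddConstP (m M p : ℝ) : ℝ :=
  if m = M then 0
  else ((M ^ p - m ^ p) / (Real.log (M ^ p) - Real.log (m ^ p))) *
    Real.log (spechtRatio ((M / m) ^ p))

open Filter Topology Asymptotics
open InformationTheory (klFun klFun_one hasDerivAt_klFun)

section ChaoticOrder

variable {𝒜 : Type*} [CStarAlgebra 𝒜] [PartialOrder 𝒜] [StarOrderedRing 𝒜] {a b : 𝒜}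

lemma tendsto_inv_smul_rpow_sub_one_log (ha : IsStrictlyPositive a) :
    Tendsto (fun p : ℝ => p⁻¹ • (a ^ p - 1)) (𝓝[>] 0) (𝓝 (CFC.log a)) := by
  refine (CFC.tendsto_cfc_rpow_sub_one_log ha).congr fun p => ?_
  simp only [← smul_eq_mul]
  rw [cfc_smul _ (hf := by fun_prop (disch := grind)),
    cfc_sub _ _ (hf := by fun_prop (disch := grind)), cfc_const_one .., CFC.rpow_eq_cfc_real ..]

theorem log_le_log_of_frequently_rpow_le (ha : IsStrictlyPositive a) (hb : IsStrictlyPositive b)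
    {c : ℝ → ℝ} (hc : c =o[𝓝[>] 0] fun p => p)
    (hab : ∃ᶠ p in 𝓝[>] (0 : ℝ), b ^ p ≤ a ^ p + c p • 1) :
    CFC.log b ≤ CFC.log a := by
  have hlim : Tendsto (fun p : ℝ => p⁻¹ • (a ^ p - 1) + (c p / p) • (1 : 𝒜)) (𝓝[>] 0)
      (𝓝 (CFC.log a)) := by
    simpa only [zero_smul, add_zero] using
      (tendsto_inv_smul_rpow_sub_one_log ha).add (hc.tendsto_div_nhds_zero.smul_const (1 : 𝒜))
  refine le_of_tendsto_of_tendsto_of_frequently (tendsto_inv_smul_rpow_sub_one_log hb) hlim ?_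
  refine (hab.and_eventually self_mem_nhdsWithin).mono fun p ⟨hp, hp0⟩ => ?_
  calc p⁻¹ • (b ^ p - 1) ≤ p⁻¹ • (a ^ p + c p • 1 - 1) :=
        smul_le_smul_of_nonneg_left (sub_le_sub_right hp 1) (inv_nonneg.2 (le_of_lt hp0))
    _ = p⁻¹ • (a ^ p - 1) + (c p / p) • (1 : 𝒜) := by module

end ChaoticOrder

section KantorovichConstant

lemma dslope_exp_zero_of_ne {u : ℝ} (hu : u ≠ 0) :
    dslope Real.exp 0 u = (Real.exp u - 1) / u := by
  rw [dslope_of_ne _ hu, slope_def_field, Real.exp_zero, sub_zero]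

lemma dslope_exp_zero_self : dslope Real.exp 0 0 = 1 := by
  rw [dslope_same, Real.deriv_exp, Real.exp_zero]

lemma differentiableAt_dslope_exp_zero : DifferentiableAt ℝ (dslope Real.exp 0) 0 :=
  let ⟨_, hexp⟩ := analyticAt_rexp (x := 0)
  hexp.has_fpower_series_dslope_fslope.differentiableAt

lemma spechtRatio_exp {u : ℝ} (hu : u ≠ 0) :
    spechtRatio (Real.exp u) =
      (Real.exp u - 1) / u * Real.exp (((Real.exp u - 1) / u)⁻¹ - 1) := by
  rw [spechtRatio, if_neg ((Real.exp_eq_one_iff u).not.2 hu), Real.log_exp, ← Real.exp_mul,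
    Real.exp_sub, inv_div, mul_one_div]
  field_simp

-- At `u = 0` both sides vanish, the left one because of `0 / 0 = 0`.
lemma slope_mul_log_spechtRatio_exp (u : ℝ) :
    (Real.exp u - 1) / u * Real.log (spechtRatio (Real.exp u)) = klFun (dslope Real.exp 0 u) := by
  obtain rfl | hu := eq_or_ne u 0
  · rw [dslope_exp_zero_self, klFun_one, div_zero, zero_mul]
  have hw : (Real.exp u - 1) / u ≠ 0 :=
    div_ne_zero (sub_ne_zero.2 ((Real.exp_eq_one_iff u).not.2 hu)) hu
  rw [dslope_exp_zero_of_ne hu, spechtRatio_exp hu, Real.log_mul hw (Real.exp_ne_zero _),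
    Real.log_exp, klFun, mul_add, mul_sub, mul_inv_cancel₀ hw]
  ring

lemma fsAddConstP_eq_rpow_mul_klFun {m M : ℝ} (hm : 0 < m) (hM : 0 < M) (p : ℝ) :
    fsAddConstP m M p = m ^ p * klFun (dslope Real.exp 0 (Real.log (M / m) * p)) := by
  obtain rfl | hne := eq_or_ne m M
  · rw [fsAddConstP, if_pos rfl, div_self hm.ne', Real.log_one, zero_mul, dslope_exp_zero_self,
      klFun_one, mul_zero]
  have hratio : (M / m) ^ p = Real.exp (Real.log (M / m) * p) :=
    Real.rpow_def_of_pos (div_pos hM hm) p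
  have hlog : Real.log (M ^ p) - Real.log (m ^ p) = Real.log (M / m) * p := by
    rw [Real.log_rpow hM, Real.log_rpow hm, Real.log_div hM.ne' hm.ne', mul_comm _ p, mul_sub]
  have hpow : M ^ p - m ^ p = m ^ p * (Real.exp (Real.log (M / m) * p) - 1) := by
    rw [← hratio, mul_sub_one, ← Real.mul_rpow hm.le (div_pos hM hm).le, mul_div_cancel₀ _ hm.ne']
  rw [fsAddConstP, if_neg hne, hratio, hlog, hpow, mul_div_assoc, mul_assoc,
    slope_mul_log_spechtRatio_exp]

lemma isLittleO_klFun_dslope_exp_zero :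
    (fun u => klFun (dslope Real.exp 0 u)) =o[𝓝 0] fun u => u := by
  have hkl : HasDerivAt klFun 0 (dslope Real.exp 0 0) := by
    simpa only [dslope_exp_zero_self, Real.log_one] using hasDerivAt_klFun one_ne_zero
  have hcomp := hkl.comp 0 differentiableAt_dslope_exp_zero.hasDerivAt
  simpa only [Function.comp_def, zero_mul, dslope_exp_zero_self, klFun_one, sub_zero, smul_zero]
    using hcomp.isLittleO

theorem isLittleO_fsAddConstP {m M : ℝ} (hm : 0 < m) (hM : 0 < M) :
    fsAddConstP m M =o[𝓝 0] fun p => p := by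
  have hpow : (fun p : ℝ => m ^ p) =O[𝓝 0] fun _ => (1 : ℝ) :=
    (Real.continuousAt_const_rpow hm.ne').isBigO_one ℝ
  have hlin : Tendsto (fun p => Real.log (M / m) * p) (𝓝 0) (𝓝 0) :=
    (continuous_const_mul _).tendsto' 0 0 (mul_zero _)
  have hkl : (fun p => klFun (dslope Real.exp 0 (Real.log (M / m) * p))) =o[𝓝 0] fun p => p :=
    (isLittleO_klFun_dslope_exp_zero.comp_tendsto hlin).trans_isBigO (isBigO_const_mul_self _ _ _)
  rw [funext (fsAddConstP_eq_rpow_mul_klFun hm hM)]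
  simpa only [one_mul] using hpow.mul_isLittleO hkl

end KantorovichConstant

lemma opPow_eq_rpow {A : H →L[ℂ] H} (hA : 0 ≤ A) (p : ℝ) : opPow A p = A ^ p :=
  (CFC.rpow_eq_cfc_real hA).symm

theorem additive_kantorovich_implies_chaotic_order_general
    {𝒜 : Type*} [CStarAlgebra 𝒜] [PartialOrder 𝒜] [StarOrderedRing 𝒜] {a b : 𝒜}
    (ha : IsStrictlyPositive a) (hb : IsStrictlyPositive b) {m M : ℝ} (hm : 0 < m) (hM : 0 < M)
    (hab : ∃ᶠ p in 𝓝[>] (0 : ℝ), b ^ p ≤ a ^ p + fsAddConstP m M p • 1) :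
    CFC.log b ≤ CFC.log a :=
  log_le_log_of_frequently_rpow_le ha hb ((isLittleO_fsAddConstP hm hM).mono nhdsWithin_le_nhds)
    hab

/-- The additive Kantorovich inequality for all `p > 0` implies the chaotic
order `log A ≥ log B`. -/
theorem additive_kantorovich_implies_chaotic_order
    (A B : H →L[ℂ] H) (m M : ℝ) (hm : 0 < m) (hmM : m ≤ M)
    (hA : A.IsPositive) (hAu : IsUnit A) (hB : B.IsPositive) (hBu : IsUnit B)
    (hlow : (B - m • 1).IsPositive) (hupp : (M • 1 - B).IsPositive)
    (hkant : ∀ p : ℝ, 0 < p →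
      ((opPow A p + fsAddConstP m M p • 1) - opPow B p).IsPositive) :
    (opLog A - opLog B).IsPositive := by
  rw [← nonneg_iff_isPositive] at hA hB
  refine additive_kantorovich_implies_chaotic_order_general (hAu.isStrictlyPositive hA)
    (hBu.isStrictlyPositive hB) hm (hm.trans_le hmM) (Eventually.frequently ?_)
  filter_upwards [self_mem_nhdsWithin] with p hp
  simpa only [opPow_eq_rpow hA, opPow_eq_rpow hB, ContinuousLinearMap.le_def] using hkant p hp
end
end

section
/- Let H be a complex Hilbert space, Ω ⊆ H open, and let u : H → ℝ be plurisubharmonic on Ω with Levi form L : H → (H →L[ℂ] H) on Ω such that the map a ↦ L a is norm-continuous on Ω. If u is maximal in Ω, then for every a ∈ Ω the Fujii–Seo determinant density FSD(u)(a) := ⨅_{‖x‖=1} Δ_x(L a) equals 0. -/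
noncomputable section

open ContinuousLinearMap

variable {H : Type*} [NormedAddCommGroup H] [InnerProductSpace ℂ H] [CompleteSpace H]

/-- The Fujii–Seo determinant of a (possibly non-invertible) positive operator,
defined as `⨅ ε > 0, Δ_x(A + ε • 1)`. -/
def fsDet₀ (A : H →L[ℂ] H) (x : H) : ℝ :=
  ⨅ ε : {ε : ℝ // 0 < ε}, fsDet (A + (ε : ℝ) • 1) x

/-- `u` is plurisubharmonic on the open set `Ω`: it is upper semicontinuous on `Ω` and
satisfies the sub-mean-value inequality on every closed complex disc contained in `Ω`. -/
def IsPsh (Ω : Set H) (u : H → ℝ) : Prop :=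
  UpperSemicontinuousOn u Ω ∧
  ∀ z ∈ Ω, ∀ h : H, (∀ l : ℂ, ‖l‖ ≤ 1 → z + l • h ∈ Ω) →
    u z ≤ (2 * Real.pi)⁻¹ *
      ∫ θ in (0:ℝ)..(2 * Real.pi), u (z + Complex.exp (θ * Complex.I) • h)

/-- `L` is a Levi form for `u` on `Ω`: each `L a` is a positive operator, and along every
complex line through a point of `Ω` the function `u` is `C²` with planar Laplacian equal to
`4 * re⟪L(·) h, h⟫`. -/
def IsLeviForm (Ω : Set H) (u : H → ℝ) (L : H → (H →L[ℂ] H)) : Prop :=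
  (∀ a ∈ Ω, (L a).IsPositive) ∧
  ∀ a ∈ Ω, ∀ h : H,
    ContDiffOn ℝ 2 (fun p : ℝ × ℝ => u (a + ((p.1 : ℂ) + (p.2 : ℂ) * Complex.I) • h))
      {p : ℝ × ℝ | a + ((p.1 : ℂ) + (p.2 : ℂ) * Complex.I) • h ∈ Ω} ∧
    ∀ s r : ℝ, a + ((s : ℂ) + (r : ℂ) * Complex.I) • h ∈ Ω →
      deriv (deriv (fun s' : ℝ => u (a + ((s' : ℂ) + (r : ℂ) * Complex.I) • h))) s +
      deriv (deriv (fun r' : ℝ => u (a + ((s : ℂ) + (r' : ℂ) * Complex.I) • h))) r =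
      4 * (L (a + ((s : ℂ) + (r : ℂ) * Complex.I) • h)).reApplyInnerSelf h

/-- `u` is maximal plurisubharmonic in `Ω`: for every bounded open `G` with closure
contained in `Ω` and every `v` plurisubharmonic on `G` with
`limsup_{z → ξ, z ∈ G} v z ≤ u ξ` for all boundary points `ξ` of `G`, one has `v ≤ u`
on `G`. -/
def IsMaximalPsh (Ω : Set H) (u : H → ℝ) : Prop :=
  ∀ G : Set H, IsOpen G → Bornology.IsBounded G → closure G ⊆ Ω →
    ∀ v : H → ℝ, IsPsh G v →
      (∀ ξ ∈ frontier G,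
        Filter.limsup (fun z => (v z : EReal)) (nhdsWithin ξ G) ≤ (u ξ : EReal)) →
      ∀ z ∈ G, v z ≤ u z

/-!
Suppose the density at `a` were `c > 0`. For a unit vector `x`, Jensen's inequality
`log A ≤ A / s + log s - 1` with `s = ⟪A x, x⟫` gives `Δ_x(A) ≤ ⟪A x, x⟫`, so `c • 1 ≤ L a`, and by
continuity `(c / 2) • 1 ≤ L` on a small ball around `a` of radius `r`. On that ball
`v z = u z - (c / 2) (‖z - a‖² - r²)` has the positive Levi form `L - (c / 2) • 1`, hence is still
plurisubharmonic: along complex lines its Laplacian is nonnegative, and the sub-mean-value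
inequality is the divergence theorem in polar coordinates. But `v` equals `u` on the sphere and
exceeds `u` at the centre, contradicting maximality.
-/

section SecondDerivatives

variable {𝕜 E F : Type*} [NontriviallyNormedField 𝕜] [NormedAddCommGroup E] [NormedSpace 𝕜 E]
  [NormedAddCommGroup F] [NormedSpace 𝕜 F]

lemma deriv_deriv_comp_add_smul {f : E → F} {x v : E} {t : 𝕜}
    (hf : ContDiffAt 𝕜 2 f (x + t • v)) :
    deriv (deriv fun s => f (x + s • v)) t = fderiv 𝕜 (fderiv 𝕜 f) (x + t • v) v v := by
  have hline : ∀ s : 𝕜, HasDerivAt (fun s => x + s • v) v s := fun s => by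
    simpa using ((hasDerivAt_id s).smul_const v).const_add x
  have hfst : deriv (fun s => f (x + s • v)) =ᶠ[nhds t] fun s => fderiv 𝕜 f (x + s • v) v := by
    filter_upwards [(hline t).continuousAt.eventually (hf.eventually (by simp))] with s hs
    exact ((hs.differentiableAt two_ne_zero).hasFDerivAt.comp_hasDerivAt s (hline s)).deriv
  have hsnd : HasDerivAt (fun s => fderiv 𝕜 f (x + s • v))
      (fderiv 𝕜 (fderiv 𝕜 f) (x + t • v) v) t :=
    ((hf.fderiv_right one_add_one_eq_two.le).differentiableAt
      one_ne_zero).hasFDerivAt.comp_hasDerivAt t (hline t)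
  rw [hfst.deriv_eq, (hsnd.clm_apply (hasDerivAt_const t v)).deriv, map_zero, add_zero]

lemma deriv_deriv_norm_add_smul_sq {E : Type*} [NormedAddCommGroup E] [InnerProductSpace ℝ E]
    (x v : E) (t : ℝ) : deriv (deriv fun s : ℝ => ‖x + s • v‖ ^ 2) t = 2 * ‖v‖ ^ 2 := by
  have hline : ∀ s : ℝ, HasDerivAt (fun s => x + s • v) v s := fun s => by
    simpa using ((hasDerivAt_id s).smul_const v).const_add x
  have hfst : deriv (fun s : ℝ => ‖x + s • v‖ ^ 2) = fun s => 2 * inner ℝ (x + s • v) v :=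
    funext fun s => (hline s).norm_sq.deriv
  rw [hfst]
  simpa using (((hline t).inner ℝ (hasDerivAt_const t v)).const_mul 2).deriv

end SecondDerivatives

section PlanarLaplacian

open Laplacian InnerProductSpace

variable {F : Type*} [NormedAddCommGroup F] [NormedSpace ℝ F]

lemma laplacian_eq_add_of_norm_eq_one (f : ℂ → F) (z : ℂ) {w : ℂ} (hw : ‖w‖ = 1) :
    Δ f z = fderiv ℝ (fderiv ℝ f) z w w
      + fderiv ℝ (fderiv ℝ f) z (w * Complex.I) (w * Complex.I) := by
  obtain ⟨w, rfl⟩ : ∃ v : Circle, (v : ℂ) = w := ⟨⟨w, mem_sphere_zero_iff_norm.2 hw⟩, rfl⟩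
  let b := Complex.orthonormalBasisOneI.map (rotation w)
  have hb0 : b 0 = w := by simp [b]
  have hb1 : b 1 = w * Complex.I := by simp [b]
  rw [laplacian_eq_iteratedFDeriv_orthonormalBasis f b]
  simp [iteratedFDeriv_two_apply, hb0, hb1]

lemma laplacian_eq_deriv_deriv_add {f : ℂ → F} {s r : ℝ}
    (hf : ContDiffAt ℝ 2 f (s + r * Complex.I)) :
    Δ f (s + r * Complex.I) =
      deriv (deriv fun s' : ℝ => f (s' + r * Complex.I)) s
        + deriv (deriv fun r' : ℝ => f (s + r' * Complex.I)) r := by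
  have hre := deriv_deriv_comp_add_smul (x := r * Complex.I) (v := (1 : ℂ)) (t := s) (f := f)
    (by simpa [add_comm] using hf)
  have him := deriv_deriv_comp_add_smul (x := (s : ℂ)) (v := Complex.I) (t := r) (f := f)
    (by simpa using hf)
  simp only [Complex.real_smul, mul_one, add_comm (_ * Complex.I)] at hre him
  rw [laplacian_eq_add_of_norm_eq_one f _ norm_one, one_mul, hre, him]

end PlanarLaplacian

section SubMeanValue

open Laplacian InnerProductSpace Set MeasureTheory

variable {F : Type*} [NormedAddCommGroup F] [NormedSpace ℝ F] {f : ℂ → F} {c : ℂ} {R r θ : ℝ}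

lemma hasDerivAt_circleMap_radius (c : ℂ) (r θ : ℝ) :
    HasDerivAt (fun s => circleMap c s θ) (circleMap 0 1 θ) r := by
  simpa [circleMap] using
    ((hasDerivAt_id r).ofReal_comp.mul_const (Complex.exp (θ * Complex.I))).const_add c

lemma contDiff_circleMap_uncurry (c : ℂ) {n : WithTop ℕ∞} :
    ContDiff ℝ n fun p : ℝ × ℝ => circleMap c p.1 p.2 := by
  unfold circleMap
  have hofReal : ContDiff ℝ n ((↑) : ℝ → ℂ) := Complex.ofRealCLM.contDiff
  exact contDiff_const.add ((hofReal.comp contDiff_fst).mul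
    (((hofReal.comp contDiff_snd).mul contDiff_const).cexp))

/-- The radial component `r ∂f/∂r` of the polar vector field whose divergence is `r Δf`. -/
def radialFlux (f : ℂ → F) (c : ℂ) (p : ℝ × ℝ) : F :=
  fderiv ℝ f (circleMap c p.1 p.2) (circleMap 0 p.1 p.2)

/-- The angular component `r⁻¹ ∂f/∂θ` of the polar vector field whose divergence is `r Δf`,
written without the division so that it is smooth up to `r = 0`. -/
def angularFlux (f : ℂ → F) (c : ℂ) (p : ℝ × ℝ) : F :=
  fderiv ℝ f (circleMap c p.1 p.2) (circleMap 0 1 p.2 * Complex.I)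

lemma contDiffAt_radialFlux {p : ℝ × ℝ} (hf : ContDiffAt ℝ 2 f (circleMap c p.1 p.2)) :
    ContDiffAt ℝ 1 (radialFlux f c) p :=
  ((hf.fderiv_right one_add_one_eq_two.le).comp p
    (contDiff_circleMap_uncurry c).contDiffAt).clm_apply
      (contDiff_circleMap_uncurry 0).contDiffAt

lemma contDiffAt_angularFlux {p : ℝ × ℝ} (hf : ContDiffAt ℝ 2 f (circleMap c p.1 p.2)) :
    ContDiffAt ℝ 1 (angularFlux f c) p :=
  ((hf.fderiv_right one_add_one_eq_two.le).comp p
    (contDiff_circleMap_uncurry c).contDiffAt).clm_apply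
      ((contDiff_circleMap 0 1).comp contDiff_snd |>.mul contDiff_const).contDiffAt

lemma fderiv_radialFlux_add_fderiv_angularFlux
    {p : ℝ × ℝ} (hf : ContDiffAt ℝ 2 f (circleMap c p.1 p.2)) :
    fderiv ℝ (radialFlux f c) p (1, 0) + fderiv ℝ (angularFlux f c) p (0, 1) =
      p.1 • Δ f (circleMap c p.1 p.2) := by
  obtain ⟨r, θ⟩ := p
  set e := circleMap 0 1 θ with he
  have hscale : circleMap 0 r θ = r • e := by simp [e, circleMap]
  have hDf : HasFDerivAt (fderiv ℝ f) _ (circleMap c r θ) :=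
    ((hf.fderiv_right one_add_one_eq_two.le).differentiableAt one_ne_zero).hasFDerivAt
  have hDfRadius : HasDerivAt (fun s => fderiv ℝ f (circleMap c s θ))
      (fderiv ℝ (fderiv ℝ f) (circleMap c r θ) e) r :=
    hDf.comp_hasDerivAt r (hasDerivAt_circleMap_radius c r θ)
  have hDfAngle : HasDerivAt (fun t => fderiv ℝ f (circleMap c r t))
      (fderiv ℝ (fderiv ℝ f) (circleMap c r θ) (circleMap 0 r θ * Complex.I)) θ :=
    hDf.comp_hasDerivAt θ (hasDerivAt_circleMap c r θ)
  have hradial : fderiv ℝ (radialFlux f c) (r, θ) (1, 0) =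
      r • fderiv ℝ (fderiv ℝ f) (circleMap c r θ) e e + fderiv ℝ f (circleMap c r θ) e := by
    refine HasDerivAt.unique (((contDiffAt_radialFlux hf).differentiableAt
      one_ne_zero).hasFDerivAt.comp_hasDerivAt r (f := fun s => (s, θ))
      ((hasDerivAt_id' r).prodMk (hasDerivAt_const r θ))) ?_
    simpa [radialFlux, Function.comp_def, hscale, ← he, -Complex.real_smul] using
      hDfRadius.clm_apply (hasDerivAt_circleMap_radius 0 r θ)
  have hangular : fderiv ℝ (angularFlux f c) (r, θ) (0, 1) =
      r • fderiv ℝ (fderiv ℝ f) (circleMap c r θ) (e * Complex.I) (e * Complex.I)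
        - fderiv ℝ f (circleMap c r θ) e := by
    refine HasDerivAt.unique (((contDiffAt_angularFlux hf).differentiableAt
      one_ne_zero).hasFDerivAt.comp_hasDerivAt θ (f := fun t => (r, t))
      ((hasDerivAt_const θ r).prodMk (hasDerivAt_id' θ))) ?_
    simpa [angularFlux, Function.comp_def, hscale, mul_assoc, sub_eq_add_neg, ← he,
      -Complex.real_smul] using
      hDfAngle.clm_apply ((hasDerivAt_circleMap 0 1 θ).mul_const Complex.I)
  rw [hradial, hangular, laplacian_eq_add_of_norm_eq_one f _ (by simp [e] : ‖e‖ = 1)]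
  module

lemma circleMap_mem_closedBall_of_mem_uIcc (hR : 0 ≤ R) (hr : r ∈ uIcc 0 R) :
    circleMap c r θ ∈ Metric.closedBall c R := by
  rw [uIcc_of_le hR] at hr
  exact Metric.closedBall_subset_closedBall hr.2 (circleMap_mem_closedBall c hr.1 θ)

theorem integral_radialFlux_eq_integral_laplacian (hR : 0 ≤ R)
    (hf : ∀ z ∈ Metric.closedBall c R, ContDiffAt ℝ 2 f z) :
    ∫ θ in (0 : ℝ)..2 * Real.pi, radialFlux f c (R, θ) =
      ∫ r in (0 : ℝ)..R, ∫ θ in (0 : ℝ)..2 * Real.pi, r • Δ f (circleMap c r θ) := by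
  have hf' : ∀ p ∈ uIcc 0 R ×ˢ uIcc 0 (2 * Real.pi), ContDiffAt ℝ 2 f (circleMap c p.1 p.2) :=
    fun p hp => hf _ (circleMap_mem_closedBall_of_mem_uIcc hR hp.1)
  have hinterior : Ioo (min 0 R) (max 0 R) ×ˢ Ioo (min 0 (2 * Real.pi)) (max 0 (2 * Real.pi)) ⊆
      uIcc 0 R ×ˢ uIcc 0 (2 * Real.pi) := prod_mono Ioo_subset_Icc_self Ioo_subset_Icc_self
  have hdivergence := integral2_divergence_prod_of_hasFDerivAt (radialFlux f c) (angularFlux f c)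
    (fderiv ℝ (radialFlux f c)) (fderiv ℝ (angularFlux f c)) 0 0 R (2 * Real.pi)
    (fun p hp => (contDiffAt_radialFlux (hf' p hp)).continuousAt.continuousWithinAt)
    (fun p hp => (contDiffAt_angularFlux (hf' p hp)).continuousAt.continuousWithinAt)
    (fun p hp => ((contDiffAt_radialFlux (hf' p (hinterior hp))).differentiableAt
      one_ne_zero).hasFDerivAt)
    (fun p hp => ((contDiffAt_angularFlux (hf' p (hinterior hp))).differentiableAt
      one_ne_zero).hasFDerivAt)
    (ContinuousOn.integrableOn_compact (isCompact_uIcc.prod isCompact_uIcc) fun p hp =>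
      ((((contDiffAt_radialFlux (hf' p hp)).continuousAt_fderiv one_ne_zero).clm_apply
        continuousAt_const).add (((contDiffAt_angularFlux (hf' p hp)).continuousAt_fderiv
          one_ne_zero).clm_apply continuousAt_const)).continuousWithinAt)
  have hperiodic : ∀ s, angularFlux f c (s, 2 * Real.pi) = angularFlux f c (s, 0) := by
    simp [angularFlux, circleMap]
  have hcenter : ∀ θ, radialFlux f c (0, θ) = 0 := by simp [radialFlux]
  simp only [hperiodic, hcenter, sub_self, zero_add, intervalIntegral.integral_zero,
    sub_zero] at hdivergence
  rw [← hdivergence]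
  refine intervalIntegral.integral_congr fun r hr => intervalIntegral.integral_congr fun θ hθ => ?_
  exact fderiv_radialFlux_add_fderiv_angularFlux (hf' (r, θ) ⟨hr, hθ⟩)

lemma integral_fderiv_circleMap [CompleteSpace F] (hR : 0 ≤ R)
    (hf : ∀ z ∈ Metric.closedBall c R, ContDiffAt ℝ 1 f z) (θ : ℝ) :
    ∫ r in (0 : ℝ)..R, fderiv ℝ f (circleMap c r θ) (circleMap 0 1 θ) =
      f (circleMap c R θ) - f c := by
  have hf' : ∀ r ∈ uIcc 0 R, ContDiffAt ℝ 1 f (circleMap c r θ) :=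
    fun r hr => hf _ (circleMap_mem_closedBall_of_mem_uIcc hR hr)
  have hradius : ∀ r, HasDerivAt (fun s => circleMap c s θ) (circleMap 0 1 θ) r :=
    fun r => hasDerivAt_circleMap_radius c r θ
  rw [intervalIntegral.integral_eq_sub_of_hasDerivAt (f := fun r => f (circleMap c r θ))]
  · simp
  · exact fun r hr =>
      ((hf' r hr).differentiableAt one_ne_zero).hasFDerivAt.comp_hasDerivAt r (hradius r)
  · refine ContinuousOn.intervalIntegrable fun r hr => ?_
    exact ((((hf' r hr).continuousAt_fderiv one_ne_zero).comp
      (f := fun s => circleMap c s θ) (hradius r).continuousAt).clm_apply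
        continuousAt_const).continuousWithinAt

theorem integral_integral_fderiv_circleMap [CompleteSpace F] (hR : 0 ≤ R)
    (hf : ∀ z ∈ Metric.closedBall c R, ContDiffAt ℝ 1 f z) :
    ∫ r in (0 : ℝ)..R, ∫ θ in (0 : ℝ)..2 * Real.pi,
        fderiv ℝ f (circleMap c r θ) (circleMap 0 1 θ) =
      (2 * Real.pi) • (Real.circleAverage f c R - f c) := by
  have hcircle : IntervalIntegrable (fun θ => f (circleMap c R θ)) volume 0 (2 * Real.pi) :=
    (continuous_iff_continuousAt.2 fun θ =>
      ((hf _ (circleMap_mem_closedBall c hR θ)).continuousAt.comp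
        (continuous_circleMap c R).continuousAt)).intervalIntegrable _ _
  rw [intervalIntegral_intervalIntegral_swap]
  · simp only [integral_fderiv_circleMap hR hf]
    rw [intervalIntegral.integral_sub hcircle intervalIntegrable_const,
      intervalIntegral.integral_const, sub_zero, smul_sub, Real.circleAverage_def,
      smul_inv_smul₀ Real.two_pi_pos.ne']
  · refine IntegrableOn.mono_set (ContinuousOn.integrableOn_compact
      (isCompact_uIcc.prod isCompact_uIcc) fun p hp => ?_)
      (prod_mono uIoc_subset_uIcc uIoc_subset_uIcc)
    exact ((((hf _ (circleMap_mem_closedBall_of_mem_uIcc hR hp.1)).continuousAt_fderiv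
      one_ne_zero).comp (f := fun p : ℝ × ℝ => circleMap c p.1 p.2)
        (contDiff_circleMap_uncurry c (n := 0)).continuous.continuousAt).clm_apply
      ((continuous_circleMap 0 1).comp continuous_snd).continuousAt).continuousWithinAt

lemma integral_fderiv_circleMap_nonneg {f : ℂ → ℝ} (hr : 0 < r)
    (hf : ∀ z ∈ Metric.closedBall c r, ContDiffAt ℝ 2 f z)
    (hΔ : ∀ z ∈ Metric.closedBall c r, 0 ≤ Δ f z) :
    0 ≤ ∫ θ in (0 : ℝ)..2 * Real.pi, fderiv ℝ f (circleMap c r θ) (circleMap 0 1 θ) := by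
  have hflux : ∫ θ in (0 : ℝ)..2 * Real.pi, radialFlux f c (r, θ) =
      r * ∫ θ in (0 : ℝ)..2 * Real.pi, fderiv ℝ f (circleMap c r θ) (circleMap 0 1 θ) := by
    rw [← intervalIntegral.integral_const_mul]
    refine intervalIntegral.integral_congr fun θ _ => ?_
    have hscale : circleMap 0 r θ = r • circleMap 0 1 θ := by simp [circleMap]
    simp only [radialFlux, hscale, map_smul, smul_eq_mul]
  refine nonneg_of_mul_nonneg_right ?_ hr
  rw [← hflux, integral_radialFlux_eq_integral_laplacian hr.le hf]
  refine intervalIntegral.integral_nonneg hr.le fun s hs =>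
    intervalIntegral.integral_nonneg Real.two_pi_pos.le fun θ _ => smul_nonneg hs.1 (hΔ _ ?_)
  exact Metric.closedBall_subset_closedBall hs.2 (circleMap_mem_closedBall c hs.1 θ)

theorem le_circleAverage_of_laplacian_nonneg {f : ℂ → ℝ} (hR : 0 ≤ R)
    (hf : ∀ z ∈ Metric.closedBall c R, ContDiffAt ℝ 2 f z)
    (hΔ : ∀ z ∈ Metric.closedBall c R, 0 ≤ Δ f z) :
    f c ≤ Real.circleAverage f c R := by
  have hnonneg : 0 ≤ (2 * Real.pi) • (Real.circleAverage f c R - f c) := by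
    rw [← integral_integral_fderiv_circleMap hR fun z hz => (hf z hz).of_le one_le_two,
      intervalIntegral.integral_of_le hR]
    refine setIntegral_nonneg measurableSet_Ioc fun r hr => ?_
    have hsub : Metric.closedBall c r ⊆ Metric.closedBall c R :=
      Metric.closedBall_subset_closedBall hr.2
    exact integral_fderiv_circleMap_nonneg hr.1 (fun z hz => hf z (hsub hz))
      fun z hz => hΔ z (hsub hz)
  exact sub_nonneg.1 (nonneg_of_mul_nonneg_right hnonneg Real.two_pi_pos)

end SubMeanValue

section QuadraticForm

variable {𝕜 E : Type*} [RCLike 𝕜] [NormedAddCommGroup E] [InnerProductSpace 𝕜 E]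

lemma add_reApplyInnerSelf (A B : E →L[𝕜] E) (x : E) :
    (A + B).reApplyInnerSelf x = A.reApplyInnerSelf x + B.reApplyInnerSelf x := by
  simp [reApplyInnerSelf_apply, inner_add_left]

lemma sub_reApplyInnerSelf (A B : E →L[𝕜] E) (x : E) :
    (A - B).reApplyInnerSelf x = A.reApplyInnerSelf x - B.reApplyInnerSelf x := by
  simp [reApplyInnerSelf_apply, inner_sub_left]

lemma one_reApplyInnerSelf (x : E) : (1 : E →L[𝕜] E).reApplyInnerSelf x = ‖x‖ ^ 2 := by
  simp [reApplyInnerSelf_apply]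

lemma smul_reApplyInnerSelf [NormedSpace ℝ E] [IsScalarTower ℝ 𝕜 E] (c : ℝ) (A : E →L[𝕜] E)
    (x : E) : (c • A).reApplyInnerSelf x = c * A.reApplyInnerSelf x := by
  rw [reApplyInnerSelf_apply, smul_apply, inner_smul_left_eq_smul, RCLike.smul_re,
    reApplyInnerSelf_apply]

lemma reApplyInnerSelf_mono {A B : E →L[𝕜] E} (hAB : A ≤ B) (x : E) :
    A.reApplyInnerSelf x ≤ B.reApplyInnerSelf x :=
  sub_nonneg.1 ((sub_reApplyInnerSelf B A x).symm ▸ ((le_def A B).1 hAB).2 x)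

end QuadraticForm

section LeviForm

open Laplacian InnerProductSpace Set

lemma contDiffAt_comp_add_mul_I_iff {F : Type*} [NormedAddCommGroup F] [NormedSpace ℝ F]
    {n : WithTop ℕ∞} {f : ℂ → F} {p : ℝ × ℝ} :
    ContDiffAt ℝ n (fun p : ℝ × ℝ => f (p.1 + p.2 * Complex.I)) p ↔
      ContDiffAt ℝ n f (p.1 + p.2 * Complex.I) := by
  simpa [Function.comp_def, Complex.equivRealProdCLM_symm_apply] using
    Complex.equivRealProdCLM.symm.contDiffAt_comp_iff (f := f) (n := n)
      (x := (p.1 + p.2 * Complex.I : ℂ))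

variable {E : Type*} [NormedAddCommGroup E] [InnerProductSpace ℂ E] {Ω G : Set E} {u w : E → ℝ}
  {L M : E → (E →L[ℂ] E)}

lemma isLeviForm_iff_laplacian (hΩ : IsOpen Ω) :
    IsLeviForm Ω u L ↔ (∀ a ∈ Ω, (L a).IsPositive) ∧
      ∀ a ∈ Ω, ∀ (h : E) (ζ : ℂ), a + ζ • h ∈ Ω →
        ContDiffAt ℝ 2 (fun ξ : ℂ => u (a + ξ • h)) ζ ∧
        Δ (fun ξ : ℂ => u (a + ξ • h)) ζ = 4 * (L (a + ζ • h)).reApplyInnerSelf h := by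
  refine and_congr_right fun _ => forall₃_congr fun a _ h => ?_
  have hopen : IsOpen {p : ℝ × ℝ | a + ((p.1 : ℂ) + (p.2 : ℂ) * Complex.I) • h ∈ Ω} :=
    hΩ.preimage (by fun_prop)
  have hsmooth : ∀ p : ℝ × ℝ,
      ContDiffAt ℝ 2 (fun p : ℝ × ℝ => u (a + ((p.1 : ℂ) + (p.2 : ℂ) * Complex.I) • h)) p ↔
        ContDiffAt ℝ 2 (fun ξ : ℂ => u (a + ξ • h)) (p.1 + p.2 * Complex.I) := fun p =>
    contDiffAt_comp_add_mul_I_iff (f := fun ξ : ℂ => u (a + ξ • h))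
  rw [hopen.contDiffOn_iff]
  constructor
  · rintro ⟨hC, hΔ⟩ ζ hζ
    rw [← Complex.re_add_im ζ] at hζ ⊢
    have hCζ := (hsmooth (ζ.re, ζ.im)).1 (hC hζ)
    exact ⟨hCζ, (laplacian_eq_deriv_deriv_add hCζ).trans (hΔ _ _ hζ)⟩
  · exact fun hL => ⟨fun p hp => (hsmooth p).2 (hL _ hp).1, fun s r hsr =>
      (laplacian_eq_deriv_deriv_add (hL _ hsr).1).symm.trans (hL _ hsr).2⟩

lemma IsLeviForm.mono (hL : IsLeviForm Ω u L) (hG : G ⊆ Ω) : IsLeviForm G u L :=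
  ⟨fun a ha => hL.1 a (hG ha), fun a ha h =>
    ⟨(hL.2 a (hG ha) h).1.mono fun _ hp => hG hp,
      fun s r hsr => (hL.2 a (hG ha) h).2 s r (hG hsr)⟩⟩

lemma IsLeviForm.sub (hΩ : IsOpen Ω) (hu : IsLeviForm Ω u L) (hw : IsLeviForm Ω w M)
    (hle : ∀ z ∈ Ω, M z ≤ L z) : IsLeviForm Ω (u - w) (L - M) := by
  rw [isLeviForm_iff_laplacian hΩ] at hu hw ⊢
  refine ⟨fun a ha => (le_def _ _).1 (hle a ha), fun a ha h ζ hζ => ?_⟩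
  obtain ⟨huC, huΔ⟩ := hu.2 a ha h ζ hζ
  obtain ⟨hwC, hwΔ⟩ := hw.2 a ha h ζ hζ
  refine ⟨huC.sub hwC, (huC.laplacian_sub hwC).trans ?_⟩
  rw [huΔ, hwΔ, ← mul_sub, ← sub_reApplyInnerSelf, Pi.sub_apply]

lemma isLeviForm_mul_norm_sub_sq_sub (Ω : Set E) {c : ℝ} (hc : 0 ≤ c) (b : E) (C : ℝ) :
    IsLeviForm Ω (fun z => c * (‖z - b‖ ^ 2 - C)) fun _ => c • 1 := by
  refine ⟨fun a _ => ?_, fun a _ h => ⟨?_, fun s r _ => ?_⟩⟩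
  · exact isPositive_one.smul_of_nonneg (𝕜 := ℂ) (c := c) (Complex.zero_le_real.2 hc)
  · have hofReal : ContDiff ℝ 2 ((↑) : ℝ → ℂ) := Complex.ofRealCLM.contDiff
    have hline : ContDiff ℝ 2 fun p : ℝ × ℝ => a + ((p.1 : ℂ) + (p.2 : ℂ) * Complex.I) • h - b :=
      (contDiff_const.add (((hofReal.comp contDiff_fst).add ((hofReal.comp contDiff_snd).mul
        contDiff_const)).smul contDiff_const)).sub contDiff_const
    exact (contDiff_const.mul ((hline.norm_sq ℂ).sub contDiff_const)).contDiffOn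
  · let := InnerProductSpace.rclikeToReal ℂ E
    have hre : ∀ s : ℝ, a + ((s : ℂ) + r * Complex.I) • h - b =
        (a + (r * Complex.I) • h - b) + s • h := fun s => by
      rw [add_smul, Complex.coe_smul]; abel
    have him : ∀ r : ℝ, a + ((s : ℂ) + r * Complex.I) • h - b =
        (a + s • h - b) + r • Complex.I • h := fun r => by
      rw [add_smul, mul_smul, Complex.coe_smul, Complex.coe_smul]; abel
    simp only [hre, him, deriv_const_mul_field', deriv_sub_const_fun,
      deriv_deriv_norm_add_smul_sq, norm_smul, Complex.norm_I]
    rw [smul_reApplyInnerSelf, one_reApplyInnerSelf]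
    ring

theorem IsLeviForm.isPsh (hΩ : IsOpen Ω) (husc : UpperSemicontinuousOn u Ω)
    (hL : IsLeviForm Ω u L) : IsPsh Ω u := by
  refine ⟨husc, fun z hz h hdisc => ?_⟩
  rw [isLeviForm_iff_laplacian hΩ] at hL
  have hmem : ∀ ζ ∈ Metric.closedBall (0 : ℂ) 1, z + ζ • h ∈ Ω :=
    fun ζ hζ => hdisc ζ (mem_closedBall_zero_iff.1 hζ)
  have hline := le_circleAverage_of_laplacian_nonneg (f := fun ζ : ℂ => u (z + ζ • h)) zero_le_one
    (fun ζ hζ => (hL.2 z hz h ζ (hmem ζ hζ)).1) fun ζ hζ => by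
      rw [(hL.2 z hz h ζ (hmem ζ hζ)).2]
      exact mul_nonneg zero_le_four ((hL.1 _ (hmem ζ hζ)).2 h)
  simpa [Real.circleAverage_def, circleMap] using hline

end LeviForm

section Maximality

variable {E : Type*} [NormedAddCommGroup E] [InnerProductSpace ℂ E] {Ω : Set E} {u : E → ℝ}
  {L : E → (E →L[ℂ] E)} {a : E} {c : ℝ}

lemma limsup_coe_ereal_le {X : Type*} [TopologicalSpace X] {f : X → ℝ} {s : Set X} {x : X}
    (hf : UpperSemicontinuousWithinAt f s x) :
    Filter.limsup (fun y => (f y : EReal)) (nhdsWithin x s) ≤ f x :=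
  (continuous_coe_real_ereal.continuousAt.comp_upperSemicontinuousWithinAt hf
    EReal.coe_strictMono.monotone).limsup_le

theorem IsMaximalPsh.not_forall_ball_smul_one_le {r : ℝ} (hmax : IsMaximalPsh Ω u)
    (husc : UpperSemicontinuousOn u Ω) (hL : IsLeviForm Ω u L)
    (hr : 0 < r) (hball : Metric.closedBall a r ⊆ Ω) (hc : 0 < c) :
    ¬ ∀ z ∈ Metric.ball a r, c • 1 ≤ L z := by
  intro hle
  have hG : Metric.ball a r ⊆ Ω := Metric.ball_subset_closedBall.trans hball
  let q : E → ℝ := fun z => c * (‖z - a‖ ^ 2 - r ^ 2)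
  have huscv : UpperSemicontinuousOn (u - q) Ω := by
    have hq : Continuous (-q) := by fun_prop
    rw [sub_eq_add_neg]
    exact husc.add (hq.upperSemicontinuous.upperSemicontinuousOn Ω)
  have hpsh : IsPsh (Metric.ball a r) (u - q) :=
    ((hL.mono hG).sub Metric.isOpen_ball (isLeviForm_mul_norm_sub_sq_sub _ hc.le a (r ^ 2))
      hle).isPsh Metric.isOpen_ball (huscv.mono hG)
  have hsphere : ∀ ξ ∈ frontier (Metric.ball a r), Filter.limsup
      (fun z => ((u - q) z : EReal)) (nhdsWithin ξ (Metric.ball a r)) ≤ u ξ := fun ξ hξ => by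
    have hξr : ξ ∈ Metric.sphere a r := Metric.frontier_ball_subset_sphere hξ
    have hqξ : q ξ = 0 := by simp [q, mem_sphere_iff_norm.1 hξr]
    have hξΩ : ξ ∈ Ω := hball (Metric.sphere_subset_closedBall hξr)
    simpa [hqξ] using limsup_coe_ereal_le ((huscv ξ hξΩ).mono hG)
  have hcenter := hmax _ Metric.isOpen_ball Metric.isBounded_ball
    (Metric.closure_ball_subset_closedBall.trans hball) _ hpsh hsphere a (Metric.mem_ball_self hr)
  have hqa : q a = -(c * r ^ 2) := by simp [q]
  have hgain : 0 < c * r ^ 2 := by positivity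
  rw [Pi.sub_apply, hqa] at hcenter
  linarith

end Maximality

section ContinuousLeviForm

variable {Ω : Set H} {u : H → ℝ} {L : H → (H →L[ℂ] H)} {a : H} {c : ℝ}

lemma smul_one_le_of_norm_sub_le {A : Type*} [CStarAlgebra A] [PartialOrder A] [StarOrderedRing A]
    {x y : A} {ε : ℝ} (hx : IsSelfAdjoint x) (hy : IsSelfAdjoint y) (hc : c • 1 ≤ x)
    (hε : ‖x - y‖ ≤ ε) : (c - ε) • 1 ≤ y := by
  have hdiff : x - y ≤ ε • 1 :=
    ((hx.sub hy).le_algebraMap_norm_self.trans_eq (Algebra.algebraMap_eq_smul_one _)).trans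
      (smul_le_smul_of_nonneg_right hε zero_le_one)
  rw [sub_smul]
  exact (sub_le_sub hc hdiff).trans_eq (sub_sub_cancel x y)

theorem IsMaximalPsh.not_smul_one_le (hmax : IsMaximalPsh Ω u) (hΩ : IsOpen Ω)
    (husc : UpperSemicontinuousOn u Ω) (hL : IsLeviForm Ω u L) (hLc : ContinuousOn L Ω)
    (ha : a ∈ Ω) (hc : 0 < c) : ¬ c • 1 ≤ L a := by
  intro hle
  have hclose : ∀ᶠ z in nhds a, dist (L z) (L a) < c / 2 :=
    Metric.tendsto_nhds.1 (hLc.continuousAt (hΩ.mem_nhds ha)) _ (half_pos hc)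
  obtain ⟨r, hr, hball⟩ :=
    Metric.nhds_basis_closedBall.eventually_iff.1 ((hΩ.eventually_mem ha).and hclose)
  refine hmax.not_forall_ball_smul_one_le husc hL hr (fun z hz => (hball hz).1) (half_pos hc)
    fun z hz => ?_
  obtain ⟨hzΩ, hzclose⟩ := hball (Metric.ball_subset_closedBall hz)
  rw [dist_comm, dist_eq_norm] at hzclose
  simpa only [sub_half] using smul_one_le_of_norm_sub_le (hL.1 a ha).isSelfAdjoint
    (hL.1 z hzΩ).isSelfAdjoint hle hzclose.le

end ContinuousLeviForm

section FujiiSeo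

variable {A : H →L[ℂ] H} {x : H}

lemma opLog_le (hA : IsStrictlyPositive A) {s : ℝ} (hs : 0 < s) :
    opLog A ≤ s⁻¹ • A + (Real.log s - 1) • 1 := by
  have hpos : ∀ t ∈ spectrum ℝ A, 0 < t := fun t ht => hA.spectrum_pos ht
  have htangent : ∀ t ∈ spectrum ℝ A, Real.log t ≤ s⁻¹ * t + (Real.log s - 1) := fun t ht => by
    have hlog := Real.log_le_sub_one_of_pos (mul_pos (inv_pos.2 hs) (hpos t ht))
    rw [Real.log_mul (inv_pos.2 hs).ne' (hpos t ht).ne', Real.log_inv] at hlog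
    linarith
  calc opLog A ≤ cfc (fun t => s⁻¹ * t + (Real.log s - 1)) A :=
        cfc_mono htangent fun t ht => (Real.continuousAt_log (hpos t ht).ne').continuousWithinAt
    _ = s⁻¹ • A + (Real.log s - 1) • 1 := by
        rw [cfc_add_const _ _ _ (by fun_prop) hA.isSelfAdjoint,
          cfc_const_mul_id _ _ hA.isSelfAdjoint, Algebra.algebraMap_eq_smul_one]

lemma reApplyInnerSelf_pos (hA : IsStrictlyPositive A) (hx : x ≠ 0) :
    0 < A.reApplyInnerSelf x := by
  have : Nontrivial H := ⟨x, 0, hx⟩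
  obtain ⟨r, hr, hle⟩ :=
    (CFC.exists_pos_algebraMap_le_iff hA.isSelfAdjoint).2 fun t ht => hA.spectrum_pos (𝕜 := ℝ) ht
  rw [Algebra.algebraMap_eq_smul_one] at hle
  calc 0 < r * ‖x‖ ^ 2 := by positivity
    _ = (r • (1 : H →L[ℂ] H)).reApplyInnerSelf x := by
        rw [smul_reApplyInnerSelf, one_reApplyInnerSelf]
    _ ≤ A.reApplyInnerSelf x := reApplyInnerSelf_mono hle x

lemma fsDet_le_reApplyInnerSelf (hA : IsStrictlyPositive A) (hx : ‖x‖ = 1) :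
    fsDet A x ≤ A.reApplyInnerSelf x := by
  have hs := reApplyInnerSelf_pos hA (norm_ne_zero_iff.1 (hx.trans_ne one_ne_zero))
  rw [fsDet, ← Real.le_log_iff_exp_le hs]
  have hlog := reApplyInnerSelf_mono (opLog_le hA hs) x
  rw [add_reApplyInnerSelf, smul_reApplyInnerSelf, smul_reApplyInnerSelf, one_reApplyInnerSelf, hx,
    inv_mul_cancel₀ hs.ne'] at hlog
  linarith

lemma fsDet₀_nonneg (A : H →L[ℂ] H) (x : H) : 0 ≤ fsDet₀ A x :=
  Real.iInf_nonneg fun _ => (Real.exp_pos _).le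

lemma fsDet₀_le_fsDet (A : H →L[ℂ] H) (x : H) {ε : ℝ} (hε : 0 < ε) :
    fsDet₀ A x ≤ fsDet (A + ε • 1) x :=
  ciInf_le (f := fun ε : {ε : ℝ // 0 < ε} => fsDet (A + (ε : ℝ) • 1) x)
    ⟨0, Set.forall_mem_range.2 fun _ => (Real.exp_pos _).le⟩ ⟨ε, hε⟩

lemma fsDet₀_le_reApplyInnerSelf (hA : A.IsPositive) (hx : ‖x‖ = 1) :
    fsDet₀ A x ≤ A.reApplyInnerSelf x := by
  refine le_of_forall_pos_le_add fun ε hε => ?_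
  have hstrict : IsStrictlyPositive (A + ε • 1) :=
    .nonneg_add ((nonneg_iff_isPositive A).2 hA) (isStrictlyPositive_one.smul hε)
  calc fsDet₀ A x ≤ fsDet (A + ε • 1) x := fsDet₀_le_fsDet A x hε
    _ ≤ (A + ε • 1).reApplyInnerSelf x := fsDet_le_reApplyInnerSelf hstrict hx
    _ = A.reApplyInnerSelf x + ε := by
        rw [add_reApplyInnerSelf, smul_reApplyInnerSelf, one_reApplyInnerSelf, hx, one_pow, mul_one]

lemma iInf_fsDet₀_smul_one_le (hA : A.IsPositive) :
    (⨅ x : {x : H // ‖x‖ = 1}, fsDet₀ A x) • 1 ≤ A := by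
  set c := ⨅ x : {x : H // ‖x‖ = 1}, fsDet₀ A x
  have hunit : ∀ x : H, ‖x‖ = 1 → c ≤ A.reApplyInnerSelf x := fun x hx =>
    (ciInf_le (f := fun x : {x : H // ‖x‖ = 1} => fsDet₀ A x)
      ⟨0, Set.forall_mem_range.2 fun _ => fsDet₀_nonneg A _⟩ ⟨x, hx⟩).trans
      (fsDet₀_le_reApplyInnerSelf hA hx)
  refine (le_def _ _).2 (isPositive_def'.2 ⟨?_, fun h => ?_⟩)
  · exact hA.isSelfAdjoint.sub ((IsSelfAdjoint.all c).smul (.one _))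
  rw [sub_reApplyInnerSelf, smul_reApplyInnerSelf, one_reApplyInnerSelf, sub_nonneg]
  rcases eq_or_ne h 0 with rfl | hh
  · simp [reApplyInnerSelf_apply]
  have hnorm : 0 < ‖h‖ := norm_pos_iff.2 hh
  have hscaled := hunit (((‖h‖⁻¹ : ℝ) : ℂ) • h) (by simp [norm_smul, hnorm.ne'])
  rwa [reApplyInnerSelf_smul, Complex.norm_real, norm_inv, norm_norm, inv_pow, inv_mul_eq_div,
    le_div_iff₀ (by positivity)] at hscaled

end FujiiSeo

/-- If `u` is maximal plurisubharmonic in `Ω` with norm-continuous Levi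
form `L`, then the Fujii–Seo determinant density of `u` vanishes identically on `Ω`. -/
theorem maximality_implies_fsd_zero
    (Ω : Set H) (hΩ : IsOpen Ω) (u : H → ℝ) (L : H → (H →L[ℂ] H))
    (hu : IsPsh Ω u) (hL : IsLeviForm Ω u L) (hLc : ContinuousOn L Ω)
    (hmax : IsMaximalPsh Ω u) :
    ∀ a ∈ Ω, (⨅ x : {x : H // ‖x‖ = 1}, fsDet₀ (L a) (x : H)) = 0 := by
  intro a ha
  have hnonneg : 0 ≤ ⨅ x : {x : H // ‖x‖ = 1}, fsDet₀ (L a) (x : H) :=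
    Real.iInf_nonneg fun x => fsDet₀_nonneg (L a) x
  refine hnonneg.eq_of_not_lt' fun hpos => ?_
  exact hmax.not_smul_one_le hΩ hu.1 hL hLc ha hpos (iInf_fsDet₀_smul_one_le (hL.1 a ha))
end
end
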